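/- The space (ℝ², d*) is strictly ball convex: for all x, y, z ∈ ℝ² with x ≠ y and every midpoint m of x and y (that is, every m ∈ ℝ² with d*(x,m) = d*(m,y) = d*(x,y)/2), one has the strict inequality d*(m, z) < max{d*(x,z), d*(y,z)}. -/

import Mathlib

/-- The river metric on ℝ². -/
noncomputable def riverDist (u v : ℝ × ℝ) : ℝ :=
  if u.1 = v.1 then |u.2 - v.2| else |u.2| + |v.2| + |u.1 - v.1|

/-- The metric segment between two points of ℝ² with the river metric. -/
def riverSegment (u v : ℝ × ℝ) : Set (ℝ × ℝ) :=
  {z | riverDist u z + riverDist z v = riverDist u v}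

/-- A set is convex (w.r.t. the river metric) if it contains all metric segments
between its points. -/
def IsRiverConvex (K : Set (ℝ × ℝ)) : Prop :=
  ∀ u ∈ K, ∀ v ∈ K, riverSegment u v ⊆ K

/-- `m` is a midpoint of `u` and `v` for the river metric. -/
def IsRiverMidpoint (u v m : ℝ × ℝ) : Prop :=
  riverDist u m = riverDist u v / 2 ∧ riverDist m v = riverDist u v / 2

/-!
The river metric is the metric of a real tree, and such metrics satisfy the four-point condition
`d x y + d z w ≤ max (d x z + d y w) (d x w + d z y)`. If `m` is a midpoint of `x` and `y`, applying
it to `x, y, m, z` gives `d m z ≤ max (d x z) (d y z) - d x y / 2`.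

The four-point condition only has to be checked on Gromov products at a single base point, where it
becomes an ultrametric inequality. At the origin the Gromov product of the river metric is
lexicographic: for points of different columns it is the product of their first coordinates on the
line, and within the column of abscissa `a` it is `|a|` plus the product of the second coordinates.
-/

section GromovProduct

variable {α : Type*} {d : α → α → ℝ}

/-- The Gromov product of `x` and `y` at the base point `p`, for an arbitrary real-valued function
`d` in place of a distance. In a tree it is the length of the common part of the segments from `p`
to `x` and from `p` to `y`. -/
noncomputable def gromovProduct (d : α → α → ℝ) (p x y : α) : ℝ :=
  (d p x + d p y - d x y) / 2

/-- The four-point condition, which characterizes the metrics of subsets of real trees. The order of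
the arguments matters, since `d` is not assumed to be symmetric. -/
def FourPointCondition (d : α → α → ℝ) : Prop :=
  ∀ x y z w, d x y + d z w ≤ max (d x z + d y w) (d x w + d z y)

theorem gromovProduct_comm (hd : ∀ x y, d x y = d y x) (p x y : α) :
    gromovProduct d p x y = gromovProduct d p y x := by
  rw [gromovProduct, gromovProduct, hd x y, add_comm (d p x)]

theorem gromovProduct_dist_nonneg {X : Type*} [PseudoMetricSpace X] (p x y : X) :
    0 ≤ gromovProduct dist p x y := by
  have := dist_triangle_left x y p
  unfold gromovProduct
  linarith

theorem gromovProduct_dist_le {X : Type*} [PseudoMetricSpace X] (p x y : X) :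
    gromovProduct dist p x y ≤ dist p x := by
  have := dist_triangle p x y
  unfold gromovProduct
  linarith

theorem add_le_add_of_min_le {R : Type*} [AddCommMonoid R] [LinearOrder R]
    [IsOrderedAddMonoid R] {f : α → α → R} (hf : ∀ x y, f x y = f y x)
    (hmin : ∀ x y z, min (f x z) (f z y) ≤ f x y) {x y z w : α}
    (hxw : f x w ≤ f x z) (hzy : f z y ≤ f x z) :
    f x w + f z y ≤ f x y + f z w := by
  have hzy_xy : f z y ≤ f x y := by simpa [hzy] using hmin x y z
  have hxw_zw : f x w ≤ f z w := by simpa [hf z x, hxw] using hmin z w x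
  rw [add_comm]
  exact add_le_add hzy_xy hxw_zw

theorem min_add_add_le_of_min_le {R : Type*} [AddCommMonoid R] [LinearOrder R]
    [IsOrderedAddMonoid R] {f : α → α → R} (hf : ∀ x y, f x y = f y x)
    (hmin : ∀ x y z, min (f x z) (f z y) ≤ f x y) (x y z w : α) :
    min (f x z + f y w) (f x w + f z y) ≤ f x y + f z w := by
  -- By symmetry, `f x z` may be taken to be the largest of the four values on the left.
  wlog hmax : max (f x w) (f z y) ≤ max (f x z) (f y w) generalizing z w
  · have hswap := this w z (by rw [hf y z, hf w y]; exact le_of_not_ge hmax)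
    rwa [min_comm, hf y z, hf w y, hf w z] at hswap
  wlog hxz : f y w ≤ f x z generalizing x y z w
  · have hswap := this y x w z (by rwa [max_comm, hf w x, hf y z, max_comm (f y w)])
      (le_of_not_ge hxz)
    rwa [add_comm (f y w), hf y z, hf w x, add_comm (f z y), hf y x, hf w z] at hswap
  rw [max_eq_left hxz, max_le_iff] at hmax
  exact min_le_of_right_le (add_le_add_of_min_le hf hmin hmax.1 hmax.2)

theorem fourPointCondition_iff_min_gromovProduct_le (hd : ∀ x y, d x y = d y x) (p : α) :
    FourPointCondition d ↔
      ∀ x y z, min (gromovProduct d p x z) (gromovProduct d p z y) ≤ gromovProduct d p x y := by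
  constructor
  · intro h x y z
    have hp := h x y p z
    unfold gromovProduct
    rw [hd x p, hd y z] at hp
    rw [min_le_iff]
    rcases le_max_iff.1 hp with hp | hp
    · right; linarith
    · left; linarith
  · intro h x y z w
    have hsum := min_add_add_le_of_min_le (gromovProduct_comm hd p) h x y z w
    unfold gromovProduct at hsum
    rw [le_max_iff]
    rcases min_le_iff.1 hsum with hsum | hsum
    · left; linarith
    · right; linarith

theorem FourPointCondition.le_max_sub_half_of_midpoint (hd : FourPointCondition d) {x y m : α}
    (hxm : d x m = d x y / 2) (hmy : d m y = d x y / 2) (z : α) :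
    d m z ≤ max (d x z) (d y z) - d x y / 2 := by
  have h := hd x y m z
  rw [hxm, hmy, add_comm (d x z), max_add_add_left, max_comm] at h
  linarith

theorem abs_add_abs_eq_max {G : Type*} [AddCommGroup G] [LinearOrder G] [IsOrderedAddMonoid G]
    (a b : G) : |a| + |b| = max |a + b| |a - b| := by
  -- Both sides are the maximum of the four elements `±a ± b`.
  simp only [abs_eq_max_neg, ← max_add_add_left, ← max_add_add_right, neg_add, sub_eq_add_neg,
    neg_neg]
  ac_rfl

theorem fourPointCondition_dist_real : FourPointCondition (dist : ℝ → ℝ → ℝ) := by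
  intro x y z w
  simp only [Real.dist_eq]
  calc
    |x - y| + |z - w| = max |x - y + (z - w)| |x - y - (z - w)| :=
      abs_add_abs_eq_max _ _
    _ = max |(x - z) - (y - w)| |(x - w) + (z - y)| := by
      rw [max_comm]; congr 2 <;> ring
    _ ≤ max (|x - z| + |y - w|) (|x - w| + |z - y|) :=
      max_le_max (abs_sub _ _) (abs_add_le _ _)

end GromovProduct

section RiverMetric

variable {u v : ℝ × ℝ}

theorem riverDist_of_fst_eq (h : u.1 = v.1) : riverDist u v = |u.2 - v.2| :=
  if_pos h

theorem riverDist_of_fst_ne (h : u.1 ≠ v.1) : riverDist u v = |u.2| + |v.2| + |u.1 - v.1| :=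
  if_neg h

theorem riverDist_comm (u v : ℝ × ℝ) : riverDist u v = riverDist v u := by
  unfold riverDist
  simp only [eq_comm (a := u.1), abs_sub_comm u.1, abs_sub_comm u.2, add_comm |u.2|]

theorem riverDist_pos (h : u ≠ v) : 0 < riverDist u v := by
  rcases eq_or_ne u.1 v.1 with h₁ | h₁
  · rw [riverDist_of_fst_eq h₁, abs_pos, sub_ne_zero]
    exact fun h₂ => h (Prod.ext h₁ h₂)
  · have := abs_pos.2 (sub_ne_zero.2 h₁)
    rw [riverDist_of_fst_ne h₁]
    positivity

theorem riverDist_zero_left (u : ℝ × ℝ) : riverDist 0 u = |u.1| + |u.2| := by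
  rcases eq_or_ne 0 u.1 with h | h
  · simp [riverDist_of_fst_eq (u := 0) h, ← h]
  · simp [riverDist_of_fst_ne (u := 0) h, add_comm]

theorem gromovProduct_riverDist_of_fst_eq (h : u.1 = v.1) :
    gromovProduct riverDist 0 u v = |u.1| + gromovProduct dist 0 u.2 v.2 := by
  simp only [gromovProduct, riverDist_zero_left, riverDist_of_fst_eq h, ← h, dist_zero_left,
    Real.norm_eq_abs, Real.dist_eq]
  ring

theorem gromovProduct_riverDist_of_fst_ne (h : u.1 ≠ v.1) :
    gromovProduct riverDist 0 u v = gromovProduct dist 0 u.1 v.1 := by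
  simp only [gromovProduct, riverDist_zero_left, riverDist_of_fst_ne h, dist_zero_left,
    Real.norm_eq_abs, Real.dist_eq]
  ring

theorem fourPointCondition_riverDist : FourPointCondition riverDist := by
  have hline := (fourPointCondition_iff_min_gromovProduct_le dist_comm 0).1
    fourPointCondition_dist_real
  refine (fourPointCondition_iff_min_gromovProduct_le riverDist_comm 0).2 fun x y z => ?_
  rcases eq_or_ne x.1 y.1 with hxy | hxy
  · rcases eq_or_ne x.1 z.1 with hxz | hxz
    · have hzy : z.1 = y.1 := hxz.symm.trans hxy
      rw [gromovProduct_riverDist_of_fst_eq hxz, gromovProduct_riverDist_of_fst_eq hzy,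
        gromovProduct_riverDist_of_fst_eq hxy, ← hxz, min_add_add_left]
      gcongr
      exact hline _ _ _
    · calc
        min (gromovProduct riverDist 0 x z) (gromovProduct riverDist 0 z y)
            ≤ gromovProduct riverDist 0 x z := min_le_left _ _
        _ = gromovProduct dist 0 x.1 z.1 := gromovProduct_riverDist_of_fst_ne hxz
        _ ≤ |x.1| := by simpa using gromovProduct_dist_le 0 x.1 z.1
        _ ≤ |x.1| + gromovProduct dist 0 x.2 y.2 :=
          le_add_of_nonneg_right (gromovProduct_dist_nonneg _ _ _)
        _ = gromovProduct riverDist 0 x y := (gromovProduct_riverDist_of_fst_eq hxy).symm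
  · rw [gromovProduct_riverDist_of_fst_ne hxy]
    rcases eq_or_ne x.1 z.1 with hxz | hxz
    · have hzy : z.1 ≠ y.1 := hxz ▸ hxy
      rw [hxz, ← gromovProduct_riverDist_of_fst_ne hzy]
      exact min_le_right _ _
    rcases eq_or_ne z.1 y.1 with hzy | hzy
    · rw [← hzy, ← gromovProduct_riverDist_of_fst_ne hxz]
      exact min_le_left _ _
    · rw [gromovProduct_riverDist_of_fst_ne hxz, gromovProduct_riverDist_of_fst_ne hzy]
      exact hline _ _ _

end RiverMetric

/-- (ℝ², d*) is strictly ball convex. -/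
theorem river_strictly_ball_convex :
    ∀ x y z m : ℝ × ℝ, x ≠ y → IsRiverMidpoint x y m →
      riverDist m z < max (riverDist x z) (riverDist y z) := by
  intro x y z m hxy ⟨hxm, hmy⟩
  calc
    riverDist m z ≤ max (riverDist x z) (riverDist y z) - riverDist x y / 2 :=
      fourPointCondition_riverDist.le_max_sub_half_of_midpoint hxm hmy z
    _ < max (riverDist x z) (riverDist y z) := sub_lt_self _ (half_pos (riverDist_pos hxy))
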